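/- For every n ≥ 0, the n-th Stirling coefficient γ_n satisfies γ_n = Σ_{k=0}^{2n} ((−1)^n 2^n Γ(n+k+1/2)/√π) Σ_{j=0}^k (2^j/(k−j)!) Σ_{i=0}^j ((−1)^i s(2n+j+i, i)/((j−i)! (2n+j+i)!)). -/

import Mathlib

open Finset

/-- The unsigned Stirling numbers of the first kind. -/
def stirling1 : ℕ → ℕ → ℕ
  | 0, 0 => 1
  | 0, _ + 1 => 0
  | _ + 1, 0 => 0
  | n + 1, j + 1 => stirling1 n j + n * stirling1 n (j + 1)

/-- Generalized binomial coefficient `C(ρ, k) = ρ(ρ-1)⋯(ρ-k+1)/k!` for real `ρ`. -/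
noncomputable def gbinomR (ρ : ℝ) (k : ℕ) : ℝ :=
  (∏ i ∈ Finset.range k, (ρ - i)) / (Nat.factorial k : ℝ)

/-- The formal power series `F(x) = 2(x - log(1+x))/x² = ∑_{m≥0} 2(-1)^m x^m/(m+2)`. -/
noncomputable def F : PowerSeries ℝ :=
  PowerSeries.mk fun m => 2 * (-1 : ℝ) ^ m / ((m : ℝ) + 2)

/-- For real `ρ`, the formal power series `F^ρ := ∑_{k≥0} C(ρ,k) (F-1)^k`; since `F - 1`
has zero constant term, the coefficient of `x^n` only involves `k ≤ n`. -/
noncomputable def Fpow (ρ : ℝ) : PowerSeries ℝ :=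
  PowerSeries.mk fun n =>
    ∑ k ∈ Finset.range (n + 1), gbinomR ρ k * PowerSeries.coeff n ((F - 1) ^ k)

/-- The `n`-th Stirling coefficient:
`γ_n = ((-1)^n (2n)!/(2^n n!)) · [x^{2n}] F^{-(n+1/2)}`. -/
noncomputable def stirlingCoeff (n : ℕ) : ℝ :=
  ((-1 : ℝ) ^ n * (Nat.factorial (2 * n) : ℝ) / (2 ^ n * (Nat.factorial n : ℝ))) *
    PowerSeries.coeff (2 * n) (Fpow (-((n : ℝ) + 1 / 2)))

/-- The formal power series `log(1+x)`. -/
noncomputable def logS : PowerSeries ℝ :=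
  PowerSeries.mk fun m => -(-1 : ℝ) ^ m / (m : ℝ)

lemma logS_deriv : (1 + PowerSeries.X) * PowerSeries.derivative ℝ logS = 1 := by
  ext m
  rw [add_mul, one_mul, map_add]
  cases m with
  | zero =>
    simp [PowerSeries.coeff_derivative, logS, PowerSeries.coeff_zero_X_mul]
  | succ m =>
    rw [PowerSeries.coeff_succ_X_mul, PowerSeries.coeff_derivative, PowerSeries.coeff_derivative,
      PowerSeries.coeff_one]
    simp only [logS, PowerSeries.coeff_mk]
    have h1 : (m : ℝ) + 1 ≠ 0 := by positivity
    have h2 : (m : ℝ) + 1 + 1 ≠ 0 := by positivity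
    push_cast
    field_simp
    ring

lemma logS_pow_deriv (i : ℕ) :
    (1 + PowerSeries.X) * PowerSeries.derivative ℝ (logS ^ (i + 1)) =
      PowerSeries.C ((i : ℝ) + 1) * logS ^ i := by
  have h := logS_deriv
  rw [Derivation.leibniz_pow]
  simp only [Nat.add_sub_cancel, smul_eq_mul, nsmul_eq_mul]
  have hc : (PowerSeries.C ((i : ℝ) + 1)) = ((i : PowerSeries ℝ) + 1) := by simp
  rw [hc]
  push_cast
  linear_combination ((i : PowerSeries ℝ) + 1) * logS ^ i * h

lemma coeff_logS_pow (m : ℕ) : ∀ i : ℕ, PowerSeries.coeff m (logS ^ i) =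
    (-1 : ℝ) ^ (m + i) * (Nat.factorial i : ℝ) * (stirling1 m i : ℝ) / (Nat.factorial m : ℝ) := by
  induction m with
  | zero =>
    intro i
    cases i with
    | zero => simp [stirling1]
    | succ i =>
      have : PowerSeries.constantCoeff logS = 0 := by
        rw [← PowerSeries.coeff_zero_eq_constantCoeff_apply]; simp [logS]
      simp [stirling1, this]
  | succ m ih =>
    intro i
    cases i with
    | zero => simp [stirling1, PowerSeries.coeff_one]
    | succ i =>
      have h := congrArg (PowerSeries.coeff m) (logS_pow_deriv i)
      rw [PowerSeries.coeff_C_mul, add_mul, one_mul, map_add, PowerSeries.coeff_derivative] at h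
      have h3 : PowerSeries.coeff m (PowerSeries.X * PowerSeries.derivative ℝ (logS ^ (i + 1)))
          = m * PowerSeries.coeff m (logS ^ (i + 1)) := by
        cases m with
        | zero => simp [PowerSeries.coeff_zero_X_mul]
        | succ m =>
          rw [PowerSeries.coeff_succ_X_mul, PowerSeries.coeff_derivative]
          push_cast; ring
      rw [h3, ih, ih] at h
      have h1 : (m : ℝ) + 1 ≠ 0 := by positivity
      have h2 : (Nat.factorial m : ℝ) ≠ 0 := by positivity
      rw [← mul_left_inj' h1, eq_sub_of_add_eq h]
      simp only [stirling1, Nat.factorial_succ]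
      push_cast
      field_simp
      ring

lemma X_sq_mul_F : PowerSeries.X ^ 2 * F = PowerSeries.C (2 : ℝ) * (PowerSeries.X - logS) := by
  ext m
  rw [PowerSeries.coeff_C_mul, map_sub, PowerSeries.coeff_X_pow_mul', PowerSeries.coeff_X]
  rcases m with _ | _ | m
  · simp [logS]
  · simp [logS]
  · simp [logS, F]
    have h2 : (m : ℝ) + 1 + 1 ≠ 0 := by positivity
    have h3 : (m : ℝ) + 2 ≠ 0 := by positivity
    field_simp
    ring

lemma coeff_F_pow (n j : ℕ) : PowerSeries.coeff (2 * n) (F ^ j) =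
    (-1 : ℝ) ^ j * 2 ^ j * (Nat.factorial j : ℝ) * ∑ i ∈ Finset.range (j + 1),
                (-1 : ℝ) ^ i * (stirling1 (2 * n + j + i) i : ℝ) /
                  ((Nat.factorial (j - i) : ℝ) * (Nat.factorial (2 * n + j + i) : ℝ)) := by
  have h : PowerSeries.coeff (2 * n) (F ^ j) =
      PowerSeries.coeff (2 * n + 2 * j) ((PowerSeries.X ^ 2 * F) ^ j) := by
    rw [mul_pow, ← pow_mul, PowerSeries.coeff_X_pow_mul]
  rw [h, X_sq_mul_F, mul_pow, ← map_pow, PowerSeries.coeff_C_mul, sub_eq_neg_add, add_pow,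
    map_sum, Finset.mul_sum, Finset.mul_sum]
  apply Finset.sum_congr rfl
  intro i hi
  have hij : i ≤ j := Nat.lt_succ_iff.mp (Finset.mem_range.mp hi)
  obtain ⟨d, rfl⟩ := Nat.exists_eq_add_of_le hij
  have e : (-logS) ^ i * PowerSeries.X ^ (i + d - i) * (((i + d).choose i : ℕ) : PowerSeries ℝ)
      = PowerSeries.C ((-1 : ℝ) ^ i * ((i + d).choose i : ℕ)) *
        (PowerSeries.X ^ d * logS ^ i) := by
    rw [neg_pow, Nat.add_sub_cancel_left]
    simp
    ring
  rw [e, PowerSeries.coeff_C_mul,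
    show 2 * n + 2 * (i + d) = (2 * n + (i + d) + i) + d by ring,
    PowerSeries.coeff_X_pow_mul, coeff_logS_pow, Nat.cast_choose ℝ hij, Nat.add_sub_cancel_left]
  have h2 : ∀ q : ℕ, (Nat.factorial q : ℝ) ≠ 0 := fun q => by positivity
  have := h2 i
  have := h2 d
  have := h2 (2 * n + (i + d) + i)
  have hs : (-1 : ℝ) ^ (2 * n + (i + d) + i + i) = (-1) ^ (i + d) := by
    rw [show 2 * n + (i + d) + i + i = 2 * (n + i) + (i + d) by ring, pow_add, pow_mul]; simp
  rw [hs]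
  field_simp

lemma coeff_F_sub_one_pow (n k : ℕ) : PowerSeries.coeff (2 * n) ((F - 1) ^ k) =
    (-1 : ℝ) ^ k * (Nat.factorial k : ℝ) * ∑ j ∈ Finset.range (k + 1),
            (2 : ℝ) ^ j / (Nat.factorial (k - j) : ℝ) *
              ∑ i ∈ Finset.range (j + 1),
                (-1 : ℝ) ^ i * (stirling1 (2 * n + j + i) i : ℝ) /
                  ((Nat.factorial (j - i) : ℝ) * (Nat.factorial (2 * n + j + i) : ℝ)) := by
  rw [sub_eq_add_neg, add_pow, map_sum, Finset.mul_sum]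
  apply Finset.sum_congr rfl
  intro j hj
  have hjk : j ≤ k := Nat.lt_succ_iff.mp (Finset.mem_range.mp hj)
  obtain ⟨d, rfl⟩ := Nat.exists_eq_add_of_le hjk
  have e : F ^ j * (-1) ^ (j + d - j) * (((j + d).choose j : ℕ) : PowerSeries ℝ)
      = PowerSeries.C ((-1 : ℝ) ^ d * ((j + d).choose j : ℕ)) * F ^ j := by
    rw [Nat.add_sub_cancel_left]
    simp
    ring
  rw [e, PowerSeries.coeff_C_mul, coeff_F_pow, Nat.cast_choose ℝ hjk, Nat.add_sub_cancel_left]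
  have h2 : ∀ q : ℕ, (Nat.factorial q : ℝ) ≠ 0 := fun q => by positivity
  have := h2 j
  have := h2 d
  generalize (∑ i ∈ Finset.range (j + 1), _ : ℝ) = S
  field_simp
  ring

lemma gamma_prod (n k : ℕ) : Real.Gamma ((n : ℝ) + k + 1 / 2) =
    (-1 : ℝ) ^ k * (∏ i ∈ Finset.range k, (-((n : ℝ) + 1 / 2) - i)) *
      Real.Gamma ((n : ℝ) + 1 / 2) := by
  induction k with
  | zero => simp
  | succ k ih =>
    rw [Finset.prod_range_succ,
      show (n : ℝ) + ((k + 1 : ℕ) : ℝ) + 1 / 2 = ((n : ℝ) + k + 1 / 2) + 1 by push_cast; ring,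
      Real.Gamma_add_one (by positivity), ih]
    ring

lemma gamma_half (n : ℕ) : Real.Gamma ((n : ℝ) + 1 / 2) =
    (Nat.factorial (2 * n) : ℝ) / (4 ^ n * (Nat.factorial n : ℝ)) * Real.sqrt Real.pi := by
  induction n with
  | zero => simp [Real.Gamma_one_half_eq, -one_div]
  | succ n ih =>
    rw [show ((n + 1 : ℕ) : ℝ) + 1 / 2 = ((n : ℝ) + 1 / 2) + 1 by push_cast; ring,
      Real.Gamma_add_one (by positivity), ih, show 2 * (n + 1) = 2 * n + 1 + 1 by ring,
      Nat.factorial_succ, Nat.factorial_succ, Nat.factorial_succ]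
    push_cast
    have : (Nat.factorial n : ℝ) ≠ 0 := by positivity
    field_simp
    ring

/-- Representation of the Stirling coefficients in terms of the unsigned Stirling numbers
of the first kind (the formula of López, Pagola and Pérez Sinusía). -/
theorem stirlingCoeff_eq_triple_sum_stirling1 (n : ℕ) :
    stirlingCoeff n =
      ∑ k ∈ Finset.range (2 * n + 1),
        ((-1 : ℝ) ^ n * 2 ^ n * Real.Gamma ((n : ℝ) + k + 1 / 2) / Real.sqrt Real.pi) *
          ∑ j ∈ Finset.range (k + 1),
            (2 : ℝ) ^ j / (Nat.factorial (k - j) : ℝ) *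
              ∑ i ∈ Finset.range (j + 1),
                (-1 : ℝ) ^ i * (stirling1 (2 * n + j + i) i : ℝ) /
                  ((Nat.factorial (j - i) : ℝ) * (Nat.factorial (2 * n + j + i) : ℝ)) := by
  have hpi : Real.sqrt Real.pi ≠ 0 := by positivity
  rw [stirlingCoeff, Fpow, PowerSeries.coeff_mk, Finset.mul_sum]
  apply Finset.sum_congr rfl
  intro k _
  rw [coeff_F_sub_one_pow, gamma_prod, gamma_half, gbinomR]
  generalize (∑ j ∈ Finset.range (k + 1), _ : ℝ) = S
  generalize (∏ i ∈ Finset.range k, _ : ℝ) = P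
  have h1 : (Nat.factorial n : ℝ) ≠ 0 := by positivity
  have h2 : (Nat.factorial k : ℝ) ≠ 0 := by positivity
  rw [show (4 : ℝ) = 2 * 2 by norm_num, mul_pow]
  field_simp
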